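/- arXiv:2107.06324 — 3 statements merged into one kernel-verified Lean document; each statement's English description precedes it below -/
import Mathlib

section
/- Let d ≥ 2 and let θ: [0,∞) → [0,∞) be nondecreasing, doubling and satisfy the Dini condition. Let φ: ℝ^{d-1} → ℝ be C¹ with φ(0) = 0, ∇φ(0) = 0 and |∇φ(x) − ∇φ(y)| ≤ θ(|x−y|); let D = {(x,t) : t > φ(x)}. Let u be harmonic on D ∩ B_{5R₀}(0), continuous on the closure, vanishing on ∂D ∩ B_{5R₀}(0), not identically zero, and suppose there exist an integer N₀ ≥ 1, a nonzero homogeneous harmonic polynomial P of degree N₀, R > 0 and C > 0 with |u(X) − P(X)| ≤ C|X|^{N₀} θ̃(2|X|) for all X ∈ D ∩ B_R(0), where θ̃(r) := θ(4r) + ∫₀^{4r} θ(s)/s ds + r∫_{4r}^{2R} θ(s)/s² ds. For 0 < r < R define T_r u(Z) := u(rZ) / ( r^{−d} ∫_{B_r(0) ∩ D} u(Y)² dY )^{1/2} for Z ∈ B_1(0) ∩ (D/r). Then, with c := ( ∫_{B_1(0) ∩ {Y_d > 0}} P(Z)² dZ )^{−1/2}, there exist r₁ ∈ (0,R) and C′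 > 0 such that |T_r u(Z) − c·P(Z)| ≤ C′ θ̃(r) for all 0 < r < r₁ and all Z ∈ B_1(0) ∩ (D/r). In particular c·P is the unique tangent function of u at 0 and the convergence rate is bounded by a constant multiple of θ̃(r). -/
open MeasureTheory Set Metric Filter intervalIntegral

noncomputable section

abbrev E (n : ℕ) := EuclideanSpace ℝ (Fin (n + 1))
abbrev Eb (n : ℕ) := EuclideanSpace ℝ (Fin n)

/-- last coordinate -/
def lastC {n : ℕ} (X : E n) : ℝ := X (Fin.last n)

/-- first `n` coordinates -/
def initC {n : ℕ} (X : E n) : Eb n :=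
  (EuclideanSpace.equiv (Fin n) ℝ).symm (fun i => X i.castSucc)

/-- the region above the graph of `φ` -/
def Dom {n : ℕ} (φ : Eb n → ℝ) : Set (E n) := {X | φ (initC X) < lastC X}

/-- `P` is a homogeneous harmonic polynomial of degree `N` on `ℝ^d`. -/
def IsHomHarmPoly {d : ℕ} (N : ℕ) (P : EuclideanSpace ℝ (Fin d) → ℝ) : Prop :=
  (∃ p : MvPolynomial (Fin d) ℝ, ∀ x, P x = MvPolynomial.eval (fun i => x i) p) ∧
  (∀ l : ℝ, 0 < l → ∀ x, P (l • x) = l ^ N * P x) ∧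
  (∀ x, ∑ i : Fin d,
    iteratedFDeriv ℝ 2 P x ![EuclideanSpace.single i 1, EuclideanSpace.single i 1] = 0)

/-- `u` is harmonic on `U`: `u` is `C²` on `U` and `Δu = 0` there. -/
def IsHarmonicOn {d : ℕ} (u : EuclideanSpace ℝ (Fin d) → ℝ)
    (U : Set (EuclideanSpace ℝ (Fin d))) : Prop :=
  ContDiffOn ℝ 2 u U ∧
  ∀ x ∈ U, ∑ i : Fin d,
    iteratedFDeriv ℝ 2 u x ![EuclideanSpace.single i 1, EuclideanSpace.single i 1] = 0

/-- `θ̃(r) = θ(4r) + ∫₀^{4r} θ(s)/s ds + r∫_{4r}^{2R} θ(s)/s² ds` -/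
def thetaTilde (θ : ℝ → ℝ) (R : ℝ) (r : ℝ) : ℝ :=
  θ (4 * r) + (∫ s in (0:ℝ)..(4 * r), θ s / s)
    + r * ∫ s in (4 * r)..(2 * R), θ s / s ^ 2

/-- the `L²`-normalized rescaling `T_r u(Z) = u(rZ) / (r^{−d} ∫_{B_r(0)∩D} u²)^{1/2}` -/
def rescaledU {n : ℕ} (φ : Eb n → ℝ) (u : E n → ℝ) (r : ℝ) (Z : E n) : ℝ :=
  u (r • Z) /
    Real.sqrt ((r ^ (n + 1))⁻¹ * ∫ Y in ball (0 : E n) r ∩ Dom φ, (u Y) ^ 2)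

section helpers

lemma theta_div_int {θ : ℝ → ℝ} (hθdini : IntegrableOn (fun s => θ s / s) (Set.Ioc (0:ℝ) 1) volume)
    {a b : ℝ} (ha : 0 ≤ a) (hab : a ≤ b) (hb : b ≤ 1) :
    IntervalIntegrable (fun s => θ s / s) volume a b := by
  rw [intervalIntegrable_iff_integrableOn_Ioc_of_le hab]
  exact hθdini.mono_set (Set.Ioc_subset_Ioc ha hb)

lemma theta_div_sq_int {θ : ℝ → ℝ} (hθmono : MonotoneOn θ (Set.Ici (0:ℝ)))
    {a b : ℝ} (ha : 0 < a) (hab : a ≤ b) :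
    IntervalIntegrable (fun s => θ s / s ^ 2) volume a b := by
  have h1 : IntervalIntegrable θ volume a b := by
    apply MonotoneOn.intervalIntegrable
    apply hθmono.mono
    intro x hx
    rw [uIcc_of_le hab] at hx
    exact ha.le.trans hx.1
  have h2 := h1.mul_continuousOn (g := fun s => (s ^ 2)⁻¹) (by
    rw [uIcc_of_le hab]
    apply ContinuousOn.inv₀ (by fun_prop)
    intro x hx
    have : 0 < x := ha.trans_le hx.1
    positivity)
  simpa only [div_eq_mul_inv] using h2

lemma theta_split {θ : ℝ → ℝ} (hθnn : ∀ r : ℝ, 0 ≤ r → 0 ≤ θ r)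
    (hθmono : MonotoneOn θ (Set.Ici (0:ℝ)))
    (hθdini : IntegrableOn (fun s => θ s / s) (Set.Ioc (0:ℝ) 1) volume)
    {a b k : ℝ} (ha : 0 < a) (hab : a ≤ b) (hb : b ≤ 1) (hk : 0 ≤ k) (hka : 4 * k ≤ a) :
    k * ∫ s in a..b, θ s / s ^ 2 ≤ 1 / 4 * ∫ s in (0:ℝ)..b, θ s / s := by
  have h0 : ∫ s in a..b, θ s / s ≤ ∫ s in (0:ℝ)..b, θ s / s := by
    rw [← integral_add_adjacent_intervals (theta_div_int hθdini le_rfl ha.le (hab.trans hb))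
      (theta_div_int hθdini ha.le hab hb)]
    have : 0 ≤ ∫ s in (0:ℝ)..a, θ s / s :=
      integral_nonneg ha.le (fun x hx => div_nonneg (hθnn x hx.1) hx.1)
    linarith
  have h1 : k * ∫ s in a..b, θ s / s ^ 2 ≤ 1 / 4 * ∫ s in a..b, θ s / s := by
    rw [← intervalIntegral.integral_const_mul, ← intervalIntegral.integral_const_mul]
    apply integral_mono_on hab ((theta_div_sq_int hθmono ha hab).const_mul _)
      ((theta_div_int hθdini ha.le hab hb).const_mul _)
    intro x hx
    have hx0 : 0 < x := ha.trans_le hx.1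
    have ht := hθnn x hx0.le
    have : k * (θ x / x ^ 2) = (k / x) * (θ x / x) := by field_simp
    rw [this]
    apply mul_le_mul_of_nonneg_right _ (by positivity)
    rw [div_le_iff₀ hx0]
    linarith [hx.1]
  linarith

lemma tt_parts {θ : ℝ → ℝ} (hθnn : ∀ r : ℝ, 0 ≤ r → 0 ≤ θ r) {R r : ℝ} (hr : 0 < r)
    (hrR : 4 * r ≤ 2 * R) :
    0 ≤ θ (4 * r) ∧ 0 ≤ (∫ s in (0:ℝ)..(4 * r), θ s / s) ∧
    0 ≤ r * ∫ s in (4 * r)..(2 * R), θ s / s ^ 2 := by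
  refine ⟨hθnn _ (by positivity), integral_nonneg (by positivity)
    (fun x hx => div_nonneg (hθnn x hx.1) hx.1), mul_nonneg hr.le ?_⟩
  apply integral_nonneg hrR
  intro x hx
  have : 0 ≤ x := le_trans (by positivity) hx.1
  exact div_nonneg (hθnn x this) (by positivity)

lemma tt_comp {θ : ℝ → ℝ} (hθnn : ∀ r : ℝ, 0 ≤ r → 0 ≤ θ r)
    (hθmono : MonotoneOn θ (Set.Ici (0:ℝ)))
    (Cθ : ℝ) (hθdbl : ∀ r : ℝ, 0 < r → θ (2 * r) ≤ Cθ * θ r)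
    (hθdini : IntegrableOn (fun s => θ s / s) (Set.Ioc (0:ℝ) 1) volume)
    {R r ρ : ℝ} (hρ : 0 < ρ) (hρr : ρ ≤ r) (h1 : 8 * r ≤ 1) (hR : 8 * r ≤ 2 * R) :
    thetaTilde θ R (2 * ρ) ≤ (3 * |Cθ| + 2) * thetaTilde θ R r := by
  have hr : 0 < r := hρ.trans_le hρr
  obtain ⟨p1, p2, p3⟩ := tt_parts hθnn (R := R) hr (by linarith)
  have e8 : θ (8 * r) ≤ |Cθ| * θ (4 * r) := by
    have := hθdbl (4 * r) (by positivity)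
    rw [show 2 * (4 * r) = 8 * r by ring] at this
    exact this.trans (mul_le_mul_of_nonneg_right (le_abs_self _) p1)
  have e8n := hθnn (8 * r) (by positivity)
  have eρ : θ (8 * ρ) ≤ θ (8 * r) := hθmono (by simp; positivity) (by simp; positivity) (by linarith)
  have i48 : ∫ s in (4 * r)..(8 * r), θ s / s ≤ θ (8 * r) := by
    have : ∫ s in (4 * r)..(8 * r), θ s / s ≤ ∫ s in (4 * r)..(8 * r), θ (8 * r) / (4 * r) := by
      apply integral_mono_on (by linarith) (theta_div_int hθdini (by positivity) (by linarith) h1)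
        (by simp)
      intro x hx
      have hx0 : 0 < x := lt_of_lt_of_le (by positivity) hx.1
      have := hθmono (show x ∈ Ici (0:ℝ) from hx0.le) (show 8 * r ∈ Ici (0:ℝ) by simp; positivity) hx.2
      exact div_le_div₀ e8n this (by positivity) hx.1
    rw [intervalIntegral.integral_const, smul_eq_mul] at this
    have e : (8 * r - 4 * r) * (θ (8 * r) / (4 * r)) = θ (8 * r) := by field_simp; ring
    linarith
  have i8 : ∫ s in (0:ℝ)..(8 * r), θ s / s ≤ (∫ s in (0:ℝ)..(4 * r), θ s / s) + θ (8 * r) := by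
    rw [← integral_add_adjacent_intervals (b := 4 * r)
      (theta_div_int hθdini le_rfl (by positivity) (by linarith))
      (theta_div_int hθdini (by positivity) (by linarith) h1)]
    linarith
  have iρ : ∫ s in (0:ℝ)..(8 * ρ), θ s / s ≤ ∫ s in (0:ℝ)..(8 * r), θ s / s := by
    rw [← integral_add_adjacent_intervals (b := 8 * ρ) (c := 8 * r)
      (theta_div_int hθdini le_rfl (by positivity) (by linarith))
      (theta_div_int hθdini (by positivity) (by linarith) h1)]
    have : 0 ≤ ∫ s in (8 * ρ)..(8 * r), θ s / s := by
      apply integral_nonneg (by linarith)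
      intro x hx
      have : 0 ≤ x := le_trans (by positivity) hx.1
      exact div_nonneg (hθnn x this) this
    linarith
  have j1 := theta_split hθnn hθmono hθdini (a := 8 * ρ) (b := 8 * r) (k := 2 * ρ)
    (by positivity) (by linarith) h1 (by positivity) (by linarith)
  have j2 : ∫ s in (8 * r)..(2 * R), θ s / s ^ 2 ≤ ∫ s in (4 * r)..(2 * R), θ s / s ^ 2 := by
    rw [← integral_add_adjacent_intervals (a := 4 * r) (b := 8 * r)
      (theta_div_sq_int hθmono (by positivity) (by linarith))
      (theta_div_sq_int hθmono (by positivity) hR)]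
    have : 0 ≤ ∫ s in (4 * r)..(8 * r), θ s / s ^ 2 := by
      apply integral_nonneg (by linarith)
      intro x hx
      have : 0 ≤ x := le_trans (by positivity) hx.1
      exact div_nonneg (hθnn x this) (by positivity)
    linarith
  have j3 : 2 * ρ * ∫ s in (8 * r)..(2 * R), θ s / s ^ 2 ≤
      2 * (r * ∫ s in (4 * r)..(2 * R), θ s / s ^ 2) := by
    have n1 : 0 ≤ ∫ s in (8 * r)..(2 * R), θ s / s ^ 2 := by
      apply integral_nonneg hR
      intro x hx
      have : 0 ≤ x := le_trans (by positivity) hx.1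
      exact div_nonneg (hθnn x this) (by positivity)
    calc _ ≤ 2 * r * ∫ s in (8 * r)..(2 * R), θ s / s ^ 2 :=
          mul_le_mul_of_nonneg_right (by linarith) n1
      _ ≤ 2 * r * ∫ s in (4 * r)..(2 * R), θ s / s ^ 2 :=
          mul_le_mul_of_nonneg_left j2 (by positivity)
      _ = _ := by ring
  have j4 : ∫ s in (8 * ρ)..(2 * R), θ s / s ^ 2 =
      (∫ s in (8 * ρ)..(8 * r), θ s / s ^ 2) + ∫ s in (8 * r)..(2 * R), θ s / s ^ 2 :=
    (integral_add_adjacent_intervals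
      (theta_div_sq_int hθmono (by positivity) (by linarith))
      (theta_div_sq_int hθmono (by positivity) hR)).symm
  unfold thetaTilde
  rw [show 4 * (2 * ρ) = 8 * ρ by ring, j4, mul_add]
  set T := θ (4 * r)
  set I := ∫ s in (0:ℝ)..(4 * r), θ s / s
  set J := r * ∫ s in (4 * r)..(2 * R), θ s / s ^ 2
  have hc := abs_nonneg Cθ
  have q1 := mul_nonneg hc p1
  have q2 := mul_nonneg hc p2
  have q3 := mul_nonneg hc p3
  nlinarith

lemma tt_small {θ : ℝ → ℝ} (hθnn : ∀ r : ℝ, 0 ≤ r → 0 ≤ θ r)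
    (hθmono : MonotoneOn θ (Set.Ici (0:ℝ)))
    (hθdini : IntegrableOn (fun s => θ s / s) (Set.Ioc (0:ℝ) 1) volume)
    {R : ℝ} (hR : 0 < R) {ε : ℝ} (hε : 0 < ε) :
    ∃ r₁ > 0, ∀ r, 0 < r → r < r₁ → thetaTilde θ R r ≤ ε := by
  have hcont : ContinuousWithinAt (fun x => ∫ s in (0:ℝ)..x, θ s / s) (Icc 0 1) 0 := by
    have := continuousOn_primitive_interval (f := fun s => θ s / s) (μ := volume) (a := 0) (b := 1)
      (by rw [uIcc_of_le zero_le_one, integrableOn_Icc_iff_integrableOn_Ioc]; exact hθdini)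
    rw [uIcc_of_le zero_le_one] at this
    exact this 0 (by simp)
  have hlim : ∀ᶠ x in nhdsWithin 0 (Icc (0:ℝ) 1), ∫ s in (0:ℝ)..x, θ s / s < ε / 8 := by
    have := hcont.tendsto
    rw [integral_same] at this
    exact this.eventually_lt_const (by positivity)
  rw [eventually_iff, Metric.mem_nhdsWithin_iff] at hlim
  obtain ⟨η, hη, hsub⟩ := hlim
  set δ := min (η / 2) (min 1 (2 * R)) with hδ
  have hδ0 : 0 < δ := by simp [hδ]; exact ⟨hη, hR⟩
  have hδ1 : δ ≤ 1 := (min_le_right _ _).trans (min_le_left _ _)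
  have hδR : δ ≤ 2 * R := (min_le_right _ _).trans (min_le_right _ _)
  have hδη : δ ≤ η / 2 := min_le_left _ _
  have hG : ∀ x, 0 ≤ x → x ≤ δ → ∫ s in (0:ℝ)..x, θ s / s < ε / 8 := by
    intro x h0 h1
    apply hsub
    refine ⟨?_, h0, h1.trans hδ1⟩
    rw [Metric.mem_ball, Real.dist_eq, sub_zero, abs_of_nonneg h0]
    linarith
  set K := ∫ s in δ..(2 * R), θ s / s ^ 2
  have hK : 0 ≤ K := by
    apply integral_nonneg hδR
    intro x hx
    have : 0 ≤ x := le_trans (by positivity) hx.1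
    exact div_nonneg (hθnn x this) (by positivity)
  refine ⟨min (δ / 8) (ε / (4 * (K + 1))), by positivity, ?_⟩
  intro r hr hlt
  have hr1 : 8 * r ≤ δ := by
    have := hlt.trans_le (min_le_left _ _); linarith
  have hr2 : r * K ≤ ε / 4 := by
    have := hlt.trans_le (min_le_right _ _)
    rw [lt_div_iff₀ (by positivity)] at this
    nlinarith
  have g4 := hG (4 * r) (by positivity) (by linarith)
  have g8 := hG (8 * r) (by positivity) (by linarith)
  have gδ := hG δ hδ0.le le_rfl
  have j1 := theta_split hθnn hθmono hθdini (a := 4 * r) (b := δ) (k := r)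
    (by positivity) (by linarith) hδ1 hr.le le_rfl
  have j4 : ∫ s in (4 * r)..(2 * R), θ s / s ^ 2 =
      (∫ s in (4 * r)..δ, θ s / s ^ 2) + K :=
    (integral_add_adjacent_intervals
      (theta_div_sq_int hθmono (by positivity) (by linarith))
      (theta_div_sq_int hθmono (by positivity) hδR)).symm
  have t4 : θ (4 * r) / 2 ≤ ∫ s in (0:ℝ)..(8 * r), θ s / s := by
    rw [← integral_add_adjacent_intervals (b := 4 * r)
      (theta_div_int hθdini le_rfl (by positivity) (by linarith))
      (theta_div_int hθdini (by positivity) (by linarith) (by linarith))]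
    have n0 : 0 ≤ (∫ s in (0:ℝ)..(4 * r), θ s / s) := (tt_parts (R := R) hθnn hr (by linarith)).2.1
    have : ∫ s in (4 * r)..(8 * r), θ (4 * r) / (8 * r) ≤ ∫ s in (4 * r)..(8 * r), θ s / s := by
      apply integral_mono_on (by linarith) (by simp)
        (theta_div_int hθdini (by positivity) (by linarith) (by linarith))
      intro x hx
      have hx0 : 0 < x := lt_of_lt_of_le (by positivity) hx.1
      have := hθmono (show 4 * r ∈ Ici (0:ℝ) by simp; positivity) (show x ∈ Ici (0:ℝ) from hx0.le) hx.1
      exact div_le_div₀ (hθnn x hx0.le) this hx0 hx.2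
    rw [intervalIntegral.integral_const, smul_eq_mul] at this
    have e : (8 * r - 4 * r) * (θ (4 * r) / (8 * r)) = θ (4 * r) / 2 := by field_simp; ring
    linarith
  unfold thetaTilde
  rw [j4, mul_add]
  linarith

lemma phi_bound {n : ℕ} {θ : ℝ → ℝ} (hθmono : MonotoneOn θ (Set.Ici (0:ℝ)))
    (φ : Eb n → ℝ) (hφ : ContDiff ℝ 1 φ) (hφ0 : φ 0 = 0) (hφ'0 : fderiv ℝ φ 0 = 0)
    (hφmod : ∀ x y : Eb n, ‖fderiv ℝ φ x - fderiv ℝ φ y‖ ≤ θ ‖x - y‖) (x : Eb n) :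
    |φ x| ≤ θ ‖x‖ * ‖x‖ := by
  have := (convex_closedBall (0 : Eb n) ‖x‖).norm_image_sub_le_of_norm_fderiv_le (𝕜 := ℝ)
    (f := φ) (C := θ ‖x‖) (x := 0) (y := x)
    (fun y _ => (hφ.differentiable (by norm_num)).differentiableAt) (by
      intro y hy
      have h := hφmod y 0
      rw [hφ'0, sub_zero, sub_zero] at h
      rw [mem_closedBall, dist_zero_right] at hy
      exact h.trans (hθmono (by simp) (by simp) hy)) (by simp) (by simp)
  simpa [hφ0] using this

lemma initC_norm {n : ℕ} (X : E n) : ‖initC X‖ ≤ ‖X‖ := by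
  rw [EuclideanSpace.norm_eq, EuclideanSpace.norm_eq]
  apply Real.sqrt_le_sqrt
  rw [Fin.sum_univ_castSucc (n := n)]
  have : 0 ≤ ‖X (Fin.last n)‖ ^ 2 := by positivity
  simp [initC]
  positivity

lemma initC_smul {n : ℕ} (r : ℝ) (X : E n) : initC (r • X) = r • initC X := by
  ext i; simp [initC]

lemma initC_cont {n : ℕ} : Continuous (initC : E n → Eb n) := by
  unfold initC; fun_prop

lemma lastC_cont {n : ℕ} : Continuous (lastC : E n → ℝ) := by
  unfold lastC; fun_prop

lemma slab_vol {n : ℕ} {τ : ℝ} (hτ : 0 ≤ τ) :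
    volume.real (ball (0 : E n) 1 ∩ {Z : E n | |lastC Z| ≤ τ}) ≤ 2 ^ n * (2 * τ) := by
  let a : Fin (n + 1) → ℝ := Fin.snoc (fun _ => 1) τ
  have hsub : ball (0 : E n) 1 ∩ {Z : E n | |lastC Z| ≤ τ} ⊆
      (MeasurableEquiv.toLp 2 (Fin (n + 1) → ℝ)).symm ⁻¹' (Icc (-a) a) := by
    rintro Z ⟨hZ, hl⟩
    rw [mem_ball_zero_iff] at hZ
    have key : ∀ i, |Z i| ≤ a i := by
      intro i
      refine Fin.lastCases ?_ (fun j => ?_) i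
      · simpa [a, lastC] using hl
      · have := PiLp.norm_apply_le Z j.castSucc
        simp only [a, Fin.snoc_castSucc]
        rw [Real.norm_eq_abs] at this
        linarith
    exact ⟨fun i => (abs_le.1 (key i)).1, fun i => (abs_le.1 (key i)).2⟩
  have hv : volume ((MeasurableEquiv.toLp 2 (Fin (n + 1) → ℝ)).symm ⁻¹' (Icc (-a) a)) =
      ENNReal.ofReal (2 ^ n * (2 * τ)) := by
    rw [(EuclideanSpace.volume_preserving_symm_measurableEquiv_toLp (Fin (n+1))).measure_preimage_equiv,
      Real.volume_Icc_pi, ← ENNReal.ofReal_prod_of_nonneg]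
    · rw [Fin.prod_univ_castSucc]
      simp only [a, Fin.snoc_castSucc, Fin.snoc_last, Pi.neg_apply, Finset.prod_const,
        Finset.card_univ, Fintype.card_fin]
      congr 1
      norm_num
      ring
    · intro i _
      refine Fin.lastCases ?_ (fun j => ?_) i <;> simp [a] <;> linarith
  rw [Measure.real]
  apply ENNReal.toReal_le_of_le_ofReal (by positivity)
  rw [← hv]
  exact measure_mono hsub

lemma poly_pos {n : ℕ} (P : E n → ℝ)
    (hP : ∃ p : MvPolynomial (Fin (n+1)) ℝ, ∀ x, P x = MvPolynomial.eval (fun i => x i) p)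
    (hPnz : P ≠ 0) (hc : Continuous P)
    (hint : IntegrableOn (fun Y => P Y ^ 2) (ball (0 : E n) 1 ∩ {Y : E n | 0 < lastC Y})) :
    0 < ∫ Y in ball (0 : E n) 1 ∩ {Y : E n | 0 < lastC Y}, (P Y) ^ 2 := by
  have hopen : IsOpen (ball (0 : E n) 1 ∩ {Y : E n | 0 < lastC Y}) :=
    isOpen_ball.inter (isOpen_lt continuous_const lastC_cont)
  rw [setIntegral_pos_iff_support_of_nonneg_ae (ae_of_all _ fun x => by positivity) hint]
  have hnz : ∃ z ∈ ball (0 : E n) 1 ∩ {Y : E n | 0 < lastC Y}, P z ≠ 0 := by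
    by_contra! h
    apply hPnz
    obtain ⟨p, hp⟩ := hP
    have han : AnalyticOnNhd ℝ P univ := by
      have := AnalyticOnNhd.eval_continuousLinearMap' (𝕜 := ℝ) (E := E n) (B := ℝ)
        (fun i : Fin (n+1) => (EuclideanSpace.proj i : E n →L[ℝ] ℝ)) p
      have e : P = fun x => MvPolynomial.eval (fun i => x i) p := funext hp
      rw [e]
      simpa [MvPolynomial.aeval_def, MvPolynomial.eval₂_eq_eval_map] using this
    let z0 : E n := EuclideanSpace.single (Fin.last n) (1/2)
    have hz0 : z0 ∈ ball (0 : E n) 1 ∩ {Y : E n | 0 < lastC Y} := by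
      constructor
      · rw [mem_ball_zero_iff, EuclideanSpace.norm_single]; norm_num
      · simp [z0, lastC]
    have := han.eqOn_zero_of_preconnected_of_eventuallyEq_zero isPreconnected_univ (mem_univ z0)
      (by filter_upwards [hopen.mem_nhds hz0] with y hy using h y hy)
    funext x
    exact this (mem_univ x)
  obtain ⟨z, hz, hPz⟩ := hnz
  have ho : IsOpen ((Function.support fun Y => P Y ^ 2) ∩ (ball (0 : E n) 1 ∩ {Y : E n | 0 < lastC Y})) :=
    ((hc.pow 2).isOpen_support).inter hopen
  exact ho.measure_pos volume ⟨z, by simpa using hPz, hz⟩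

lemma final_alg {A b v p e f M : ℝ} (hA : 0 < A) (hb : A / 2 ≤ b) (hv : |v - p| ≤ e)
    (hp : |p| ≤ M) (hf : |b - A| ≤ f) :
    |v / √b - (√A)⁻¹ * p| ≤ (e + M * f / A) / √(A / 2) := by
  have hb0 : 0 < b := by linarith
  have hsA := Real.sqrt_pos.2 hA
  have hsb := Real.sqrt_pos.2 hb0
  have hsh := Real.sqrt_pos.2 (half_pos hA)
  have hle := Real.sqrt_le_sqrt hb
  have e1 : |√b - √A| ≤ f / √A := by
    rw [le_div_iff₀ hsA]
    have : |b - A| = |√b - √A| * (√b + √A) := by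
      rw [← abs_of_pos (add_pos hsb hsA), ← abs_mul]
      congr 1
      have := Real.sq_sqrt hb0.le
      have := Real.sq_sqrt hA.le
      nlinarith
    nlinarith [abs_nonneg (√b - √A), mul_nonneg (abs_nonneg (√b - √A)) hsb.le]
  have e2 : v / √b - (√A)⁻¹ * p = ((v - p) - p * (√b - √A) / √A) / √b := by
    field_simp; ring
  have he : 0 ≤ e := (abs_nonneg _).trans hv
  have hM : 0 ≤ M := (abs_nonneg _).trans hp
  have hf0 : 0 ≤ f := (abs_nonneg _).trans hf
  rw [e2, abs_div, abs_of_pos hsb]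
  apply div_le_div₀ (by positivity) _ hsh hle
  refine (abs_sub _ _).trans (add_le_add hv ?_)
  rw [abs_div, abs_mul, abs_of_pos hsA]
  calc |p| * |√b - √A| / √A ≤ M * (f / √A) / √A := by gcongr
    _ = M * f / (√A * √A) := by field_simp
    _ = _ := by rw [Real.mul_self_sqrt hA.le]

open scoped Pointwise in
lemma scale_int {n : ℕ} (φ : Eb n → ℝ) (f : E n → ℝ) {r : ℝ} (hr : 0 < r) :
    ∫ Y in ball (0 : E n) 1 ∩ {Y : E n | r • Y ∈ Dom φ}, f (r • Y) =
      (r ^ (n + 1))⁻¹ * ∫ Y in ball (0 : E n) r ∩ Dom φ, f Y := by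
    have h1 := Measure.setIntegral_comp_smul_of_pos (volume : Measure (E n)) f
      (ball (0 : E n) 1 ∩ {Y : E n | r • Y ∈ Dom φ}) hr
    have h2 : r • (ball (0 : E n) 1 ∩ {Y : E n | r • Y ∈ Dom φ}) = ball (0 : E n) r ∩ Dom φ := by
      ext Y
      rw [mem_smul_set_iff_inv_smul_mem₀ hr.ne']
      simp only [mem_inter_iff, mem_setOf_eq, smul_inv_smul₀ hr.ne', mem_ball_zero_iff,
        norm_smul, norm_inv, Real.norm_eq_abs, abs_of_pos hr]
      rw [inv_mul_lt_iff₀ hr, mul_one]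
    rw [h2, finrank_euclideanSpace_fin, smul_eq_mul] at h1
    exact h1

end helpers

set_option maxHeartbeats 2000000

/-- convergence rate to the unique tangent function. If `u` has the
expansion `u = P + O(|X|^{N₀}θ̃(2|X|))` at `0 ∈ ∂D`, then with
`c = (∫_{B₁∩ℝ^d_+} P²)^{−1/2}` we have `|T_r u(Z) − cP(Z)| ≤ C′θ̃(r)` for all small
`r > 0` and all `Z ∈ B₁(0) ∩ (D/r)`; in particular `cP` is the unique tangent function
of `u` at `0`. -/
theorem tangent_function_convergence_rate
    {n : ℕ} (hn : 1 ≤ n)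
    (θ : ℝ → ℝ) (hθnn : ∀ r : ℝ, 0 ≤ r → 0 ≤ θ r)
    (hθmono : MonotoneOn θ (Set.Ici (0:ℝ)))
    (Cθ : ℝ) (hθdbl : ∀ r : ℝ, 0 < r → θ (2 * r) ≤ Cθ * θ r)
    (hθdini : IntegrableOn (fun s => θ s / s) (Set.Ioc (0:ℝ) 1) volume)
    (φ : Eb n → ℝ) (hφ : ContDiff ℝ 1 φ) (hφ0 : φ 0 = 0) (hφ'0 : fderiv ℝ φ 0 = 0)
    (hφmod : ∀ x y : Eb n, ‖fderiv ℝ φ x - fderiv ℝ φ y‖ ≤ θ ‖x - y‖)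
    (R₀ : ℝ) (hR₀ : 0 < R₀)
    (u : E n → ℝ)
    (hu : IsHarmonicOn u (Dom φ ∩ ball 0 (5 * R₀)))
    (huc : ContinuousOn u (closure (Dom φ ∩ ball 0 (5 * R₀))))
    (hub : ∀ X ∈ frontier (Dom φ) ∩ ball (0 : E n) (5 * R₀), u X = 0)
    (hunz : ∃ X ∈ Dom φ ∩ ball (0 : E n) (5 * R₀), u X ≠ 0)
    (N₀ : ℕ) (hN₀ : 1 ≤ N₀)
    (P : E n → ℝ) (hP : IsHomHarmPoly N₀ P) (hPnz : P ≠ 0)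
    (R C : ℝ) (hR : 0 < R) (hC : 0 < C)
    (hexp : ∀ X ∈ Dom φ ∩ ball (0 : E n) R,
      |u X - P X| ≤ C * ‖X‖ ^ N₀ * thetaTilde θ R (2 * ‖X‖)) :
    ∃ (r₁ C' : ℝ), 0 < r₁ ∧ r₁ < R ∧ 0 < C' ∧
      ∀ r : ℝ, 0 < r → r < r₁ →
        ∀ Z ∈ ball (0 : E n) 1, r • Z ∈ Dom φ →
          |rescaledU φ u r Z -
            (Real.sqrt (∫ Y in ball (0 : E n) 1 ∩ {Y : E n | 0 < lastC Y}, (P Y) ^ 2))⁻¹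
              * P Z|
            ≤ C' * thetaTilde θ R r := by
  obtain ⟨hPpoly, hPhom, -⟩ := hP
  have hPc : Continuous P := by
    obtain ⟨p, hp⟩ := hPpoly
    rw [show P = fun x => MvPolynomial.eval (fun i => x i) p from funext hp]
    have := p.continuous_eval
    exact this.comp (by fun_prop)
  obtain ⟨M, hM⟩ := (isCompact_closedBall (0 : E n) 1).exists_bound_of_continuousOn hPc.continuousOn
  have hMb : ∀ Z ∈ ball (0 : E n) 1, |P Z| ≤ M := fun Z hZ => hM Z (ball_subset_closedBall hZ)
  have hM0 : 0 ≤ M := (abs_nonneg _).trans (hMb 0 (by simp))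
  have hPsq : ∀ Z ∈ ball (0 : E n) 1, P Z ^ 2 ≤ M ^ 2 := fun Z hZ =>
    sq_le_sq' (abs_le.1 (hMb Z hZ)).1 (abs_le.1 (hMb Z hZ)).2
  have hPint1 : IntegrableOn (fun Y => P Y ^ 2) (ball (0 : E n) 1) :=
    ((hPc.pow 2).continuousOn.integrableOn_compact (isCompact_closedBall (0 : E n) 1)).mono_set
      ball_subset_closedBall
  have hPint : ∀ S ⊆ ball (0 : E n) 1, IntegrableOn (fun Y => P Y ^ 2) S := fun S hS =>
    hPint1.mono_set hS
  have hApos := poly_pos P hPpoly hPnz hPc (hPint _ inter_subset_left)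
  set h : Set (E n) := ball (0 : E n) 1 ∩ {Y : E n | 0 < lastC Y} with hh
  set A := ∫ Y in h, (P Y) ^ 2 with hA
  set V := volume.real (ball (0 : E n) 1) with hV
  have hV0 : 0 ≤ V := measureReal_nonneg
  set K := C * (3 * |Cθ| + 2) with hK
  have hK0 : 0 ≤ K := by positivity
  set L := K * (2 * M + K) * V + M ^ 2 * (2 ^ n * 2) with hL
  have hL0 : 0 ≤ L := by positivity
  obtain ⟨ρ₁, hρ₁, hsmall⟩ := tt_small hθnn hθmono hθdini hR (ε := min 1 (A / (2 * (L + 1))))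
    (by positivity)
  refine ⟨min ρ₁ (min (1 / 8) (min (R / 4) (5 * R₀))), (K + M * L / A) / √(A / 2) + 1,
    by positivity, ?_, by positivity, ?_⟩
  · have : min ρ₁ (min (1 / 8) (min (R / 4) (5 * R₀))) ≤ R / 4 :=
      (min_le_right _ _).trans ((min_le_right _ _).trans (min_le_left _ _))
    linarith
  intro r hr hrlt Z hZ hZD
  simp only [lt_min_iff] at hrlt
  obtain ⟨hr1, hr2, hr3, hr4⟩ := hrlt
  have hsm := hsmall r hr hr1
  set t := thetaTilde θ R r with ht
  have ht1 : t ≤ 1 := hsm.trans (min_le_left _ _)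
  have htA : t ≤ A / (2 * (L + 1)) := hsm.trans (min_le_right _ _)
  obtain ⟨p1, p2, p3⟩ := tt_parts hθnn (R := R) hr (by linarith)
  have ht0 : 0 ≤ t := by rw [ht, thetaTilde]; positivity
  have hDopen : IsOpen (Dom φ) := isOpen_lt (hφ.continuous.comp initC_cont) lastC_cont
  set s : Set (E n) := ball (0 : E n) 1 ∩ {Y : E n | r • Y ∈ Dom φ} with hs
  have hsopen : IsOpen s := isOpen_ball.inter (hDopen.preimage (continuous_const_smul r))
  have hhopen : IsOpen h := isOpen_ball.inter (isOpen_lt continuous_const lastC_cont)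
  have hsb : s ⊆ ball (0 : E n) 1 := inter_subset_left
  have hhb : h ⊆ ball (0 : E n) 1 := inter_subset_left
  set v : E n → ℝ := fun Y => u (r • Y) / r ^ N₀ with hv
  have hnormr : ∀ Y ∈ s, ‖r • Y‖ < r := by
    intro Y hY
    have := hsb hY
    rw [mem_ball_zero_iff] at this
    rw [norm_smul, Real.norm_eq_abs, abs_of_pos hr]
    nlinarith
  -- pointwise estimate
  have hvP : ∀ Y ∈ s, |v Y - P Y| ≤ K * t := by
    intro Y hY
    have hn1 := hnormr Y hY
    have hY1 := hsb hY
    rw [mem_ball_zero_iff] at hY1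
    have hne : 0 < ‖r • Y‖ := by
      rw [norm_pos_iff]
      intro h0
      have := hY.2
      rw [mem_setOf_eq, h0] at this
      have h2 : φ (initC (0 : E n)) < lastC (0 : E n) := this
      rw [show initC (0 : E n) = 0 by ext i; simp [initC], hφ0] at h2
      simp [lastC] at h2
    have h1 := hexp (r • Y) ⟨hY.2, by rw [mem_ball_zero_iff]; linarith⟩
    have h2 := tt_comp hθnn hθmono Cθ hθdbl hθdini (R := R) hne hn1.le (by linarith) (by linarith)
    have h3 : ‖r • Y‖ ^ N₀ ≤ r ^ N₀ := pow_le_pow_left₀ (norm_nonneg _) hn1.le _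
    have hrN : 0 < r ^ N₀ := by positivity
    have h4 : |u (r • Y) - P (r • Y)| ≤ C * r ^ N₀ * ((3 * |Cθ| + 2) * t) := by
      calc _ ≤ _ := h1
        _ ≤ C * ‖r • Y‖ ^ N₀ * ((3 * |Cθ| + 2) * t) :=
            mul_le_mul_of_nonneg_left h2 (by positivity)
        _ ≤ _ := by gcongr
    rw [hPhom r hr] at h4
    have h5 : v Y - P Y = (u (r • Y) - r ^ N₀ * P Y) / r ^ N₀ := by
      simp only [hv]; field_simp
    rw [h5, abs_div, abs_of_pos hrN, div_le_iff₀ hrN]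
    calc _ ≤ _ := h4
      _ = _ := by rw [hK]; ring
  have hZs : Z ∈ s := ⟨hZ, hZD⟩
  -- integrability of `v ^ 2`
  have hucont : ContinuousOn v s := by
    apply ContinuousOn.div_const
    refine huc.comp (continuous_const_smul r).continuousOn ?_
    intro Y hY
    apply subset_closure
    refine ⟨hY.2, ?_⟩
    rw [mem_ball_zero_iff]
    linarith [hnormr Y hY]
  have hsfin : volume s < ⊤ := (measure_mono hsb).trans_lt measure_ball_lt_top
  have hvb : ∀ Y ∈ s, |v Y ^ 2 - P Y ^ 2| ≤ K * (2 * M + K) * t := by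
    intro Y hY
    have h1 := hvP Y hY
    have h2 := hMb Y (hsb hY)
    have h3 : |v Y + P Y| ≤ 2 * M + K := by
      have : v Y + P Y = (v Y - P Y) + 2 * P Y := by ring
      rw [this]
      refine (abs_add_le _ _).trans ?_
      rw [abs_mul, abs_two]
      nlinarith
    rw [show v Y ^ 2 - P Y ^ 2 = (v Y - P Y) * (v Y + P Y) by ring, abs_mul]
    calc _ ≤ (K * t) * (2 * M + K) := by gcongr
      _ = _ := by ring
  have hdint : IntegrableOn (fun Y => v Y ^ 2 - P Y ^ 2) s := by
    refine IntegrableOn.of_bound hsfin ?_ (K * (2 * M + K) * t) ?_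
    · exact ((hucont.pow 2).sub (hPc.pow 2).continuousOn).aestronglyMeasurable hsopen.measurableSet
    · filter_upwards [ae_restrict_mem hsopen.measurableSet] with Y hY using hvb Y hY
  set b := ∫ Y in s, v Y ^ 2 with hb
  have hbs : b = (∫ Y in s, (v Y ^ 2 - P Y ^ 2)) + ∫ Y in s, P Y ^ 2 := by
    rw [← integral_add hdint (hPint s hsb)]
    simp [hb]
  have hd1 : |∫ Y in s, (v Y ^ 2 - P Y ^ 2)| ≤ K * (2 * M + K) * t * V := by
    have := norm_setIntegral_le_of_norm_le_const hsfin (C := K * (2 * M + K) * t)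
      (f := fun Y => v Y ^ 2 - P Y ^ 2) (fun Y hY => hvb Y hY)
    refine this.trans (mul_le_mul_of_nonneg_left ?_ (by positivity))
    exact measureReal_mono hsb measure_ball_lt_top.ne
  -- the slab
  set S : Set (E n) := {Y : E n | |lastC Y| ≤ θ r} with hS
  have hSm : MeasurableSet S := (isClosed_le lastC_cont.abs continuous_const).measurableSet
  have hθr : 0 ≤ θ r := hθnn r hr.le
  have hθrt : θ r ≤ t := by
    have : θ r ≤ θ (4 * r) := hθmono hr.le (by simp; positivity) (by linarith)
    rw [ht, thetaTilde]; linarith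
  have hdiff : s \ S = h \ S := by
    ext Y
    simp only [hs, hh, hS, mem_diff, mem_inter_iff, mem_setOf_eq, not_le]
    constructor
    all_goals
      rintro ⟨⟨hY1, hY2⟩, hY3⟩
      refine ⟨⟨hY1, ?_⟩, hY3⟩
      have hφb : |φ (initC (r • Y))| ≤ θ r * r := by
        have h1 := phi_bound hθmono φ hφ hφ0 hφ'0 hφmod (initC (r • Y))
        rw [mem_ball_zero_iff] at hY1
        have h2 : ‖initC (r • Y)‖ ≤ r := by
          refine (initC_norm _).trans ?_
          rw [norm_smul, Real.norm_eq_abs, abs_of_pos hr]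
          nlinarith
        have h3 := hθmono (show ‖initC (r • Y)‖ ∈ Ici (0:ℝ) from norm_nonneg _) hr.le h2
        exact h1.trans (mul_le_mul h3 h2 (norm_nonneg _) hθr)
      have hl : lastC (r • Y) = r * lastC Y := by simp [lastC]
      obtain ⟨hφ1, hφ2⟩ := abs_le.1 hφb
    · change φ (initC (r • Y)) < lastC (r • Y) at hY2
      rw [hl] at hY2
      by_contra! hneg
      rw [abs_of_nonpos hneg] at hY3
      nlinarith
    · change φ (initC (r • Y)) < lastC (r • Y)
      rw [hl]
      rw [abs_of_pos hY2] at hY3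
      nlinarith
  have hslab : ∀ q : Set (E n), q ⊆ ball (0 : E n) 1 →
      0 ≤ ∫ Y in q ∩ S, P Y ^ 2 ∧ ∫ Y in q ∩ S, P Y ^ 2 ≤ M ^ 2 * (2 ^ n * 2) * t := by
    intro q hq
    refine ⟨integral_nonneg (fun Y => by positivity), ?_⟩
    have hfin : volume (q ∩ S) < ⊤ :=
      (measure_mono (inter_subset_left.trans hq)).trans_lt measure_ball_lt_top
    have h1 := norm_setIntegral_le_of_norm_le_const hfin (C := M ^ 2)
      (f := fun Y => P Y ^ 2) (fun Y hY => by
        rw [Real.norm_eq_abs, abs_of_nonneg (by positivity)]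
        exact hPsq Y (hq hY.1))
    have h2 : volume.real (q ∩ S) ≤ 2 ^ n * (2 * θ r) := by
      refine le_trans (measureReal_mono (inter_subset_inter_left S hq) ?_) (slab_vol hθr)
      exact ((measure_mono inter_subset_left).trans_lt measure_ball_lt_top).ne
    calc _ ≤ _ := (le_abs_self _).trans h1
      _ ≤ M ^ 2 * (2 ^ n * (2 * t)) := by
        apply mul_le_mul_of_nonneg_left _ (by positivity)
        refine h2.trans ?_
        gcongr
      _ = _ := by ring
  have hsS := integral_inter_add_diff hSm (hPint s hsb)
  have hhS := integral_inter_add_diff hSm (hPint h hhb)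
  have hd2 : |(∫ Y in s, P Y ^ 2) - A| ≤ M ^ 2 * (2 ^ n * 2) * t := by
    rw [hA, ← hsS, ← hhS, hdiff]
    obtain ⟨a1, a2⟩ := hslab s hsb
    obtain ⟨b1, b2⟩ := hslab h hhb
    rw [abs_le]; constructor <;> linarith
  have hbA : |b - A| ≤ L * t := by
    have : b - A = (∫ Y in s, (v Y ^ 2 - P Y ^ 2)) + ((∫ Y in s, P Y ^ 2) - A) := by
      rw [hbs]; ring
    rw [this]
    refine (abs_add_le _ _).trans ?_
    rw [hL]; nlinarith
  have hbhalf : A / 2 ≤ b := by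
    have h1 : L * t ≤ A / 2 := by
      rw [le_div_iff₀ (by positivity)] at htA
      nlinarith
    linarith [(abs_le.1 hbA).1]
  -- identification of the rescaled function
  have hscale : (r ^ (n + 1))⁻¹ * ∫ Y in ball (0 : E n) r ∩ Dom φ, (u Y) ^ 2 = (r ^ N₀) ^ 2 * b := by
    have h1 := scale_int φ (fun Y => u Y ^ 2) hr
    rw [← h1, hb, ← MeasureTheory.integral_const_mul]
    congr 1
    funext Y
    simp only [hv]
    field_simp
  have hres : rescaledU φ u r Z = v Z / √b := by
    rw [rescaledU, hscale, Real.sqrt_mul (by positivity), Real.sqrt_sq (by positivity)]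
    simp only [hv]
    rw [div_div]
  rw [hres]
  refine (final_alg hApos hbhalf (hvP Z hZs) (hMb Z hZ) hbA).trans ?_
  have : (K * t + M * (L * t) / A) / √(A / 2) = (K + M * L / A) / √(A / 2) * t := by ring
  rw [this]
  nlinarith
end
end

section
/- Let d ≥ 2 and let θ: [0,∞) → [0,∞) be nondecreasing with θ(r) → 0 as r → 0+. Let φ: ℝ^{d-1} → ℝ be C¹ with ‖∇φ‖_∞ ≤ 1 and |∇φ(x) − ∇φ(y)| ≤ θ(|x−y|) for all x, y; let D = {(x,t) : t > φ(x)}. Let u : D → ℝ, let N ≥ 1 be an integer, and let ε : (0,∞) → [0,∞) satisfy ε(r) → 0 as r → 0+. Let X_j = (x_j, φ(x_j)) be boundary points with X_j → X₀ = (x₀, φ(x₀)) as j → ∞, and suppose there are R > 0, C > 0 and, for each j ∈ ℕ ∪ {0}, a homogeneous harmonic polynomial P_j of degree N on ℝ^d such that |u(X) − P_j(X − X_j)| ≤ C |X − X_j|^N ε(|X − X_j|) for all X ∈ B_R(X_j) ∩ D. Then P_j → P₀ uniformly on B_1(0); consequently, since the homogeneous polynomials of degree N form a finite-dimensional space, P_j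 → P₀ together with all derivatives uniformly on compact subsets of ℝ^d (i.e. in C^k-topology for every k). -/
open MeasureTheory Set Metric Filter

noncomputable section

/-- the point `(x, t)` of `ℝ^{n+1}` -/
def graphPt {n : ℕ} (x : Eb n) (t : ℝ) : E n :=
  (EuclideanSpace.equiv (Fin (n + 1)) ℝ).symm
    (Fin.snoc ((EuclideanSpace.equiv (Fin n) ℝ) x) t)

/-- index set of degree `N` monomials -/
abbrev MonIx (d N : ℕ) := {m : Fin d →₀ ℕ // m ∈ Finset.finsuppAntidiag (Finset.univ : Finset (Fin d)) N}

/-- monomial function -/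
def monF {d N : ℕ} (i : MonIx d N) (x : EuclideanSpace ℝ (Fin d)) : ℝ := ∏ k, x k ^ (i.1 k)

lemma monF_contDiff {d N : ℕ} (i : MonIx d N) (k : WithTop ℕ∞) : ContDiff ℝ k (monF i) := by
  unfold monF
  fun_prop

lemma exists_coeffs {d N : ℕ} {P : EuclideanSpace ℝ (Fin d) → ℝ} (h : IsHomHarmPoly N P) :
    ∃ c : MonIx d N → ℝ, ∀ x, P x = ∑ i, c i • monF i x := by
  obtain ⟨⟨p, hp⟩, hh, -⟩ := h
  have key : ∀ x, P x = MvPolynomial.eval (fun i => x i) (MvPolynomial.homogeneousComponent N p) := by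
    intro x
    let q : Polynomial ℝ := ∑ k ∈ Finset.range (p.totalDegree + 1),
      Polynomial.monomial k (MvPolynomial.eval (fun i => x i) (MvPolynomial.homogeneousComponent k p))
    have hq : q = Polynomial.monomial N (P x) := by
      apply Polynomial.eq_of_infinite_eval_eq
      refine (Set.Ioi_infinite (0:ℝ)).mono ?_
      intro l hl
      have h1 := hh l hl x
      rw [hp (l • x)] at h1
      simp only [Set.mem_ofPred_eq, q, Polynomial.eval_finsetSum, Polynomial.eval_monomial]
      rw [mul_comm (P x), ← h1]
      conv_rhs => rw [← MvPolynomial.sum_homogeneousComponent p, map_sum]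
      refine Finset.sum_congr rfl fun k _ => ?_
      rw [mul_comm]
      rw [MvPolynomial.eval_eq', MvPolynomial.eval_eq', Finset.mul_sum]
      refine Finset.sum_congr rfl fun m hm => ?_
      have hm' := (MvPolynomial.homogeneousComponent_isHomogeneous k p)
        (MvPolynomial.mem_support_iff.1 hm)
      have hk : ∑ i, m i = k := by
        rw [← hm', Finsupp.weight_apply, Finsupp.sum_fintype] <;> simp
      simp only [PiLp.smul_apply, smul_eq_mul, mul_pow, Finset.prod_mul_distrib]
      rw [Finset.prod_pow_eq_pow_sum, hk]
      ring
    have h2 := congrArg (fun r => Polynomial.coeff r N) hq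
    simp only [q, Polynomial.finsetSum_coeff, Polynomial.coeff_monomial, if_true] at h2
    rw [← h2, Finset.sum_ite_eq' ]
    split_ifs with h3
    · rfl
    · rw [MvPolynomial.homogeneousComponent_eq_zero]
      · simp
      · simpa [Nat.lt_succ_iff] using h3
  refine ⟨fun i => MvPolynomial.coeff i.1 p, fun x => ?_⟩
  rw [key x, MvPolynomial.eval_eq']
  change _ = ∑ i : MonIx d N, (fun m : Fin d →₀ ℕ => MvPolynomial.coeff m p • ∏ k, x k ^ (m k)) i.1
  rw [Finset.sum_coe_sort (Finset.finsuppAntidiag (Finset.univ : Finset (Fin d)) N)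
    (fun m => MvPolynomial.coeff m p • ∏ k, x k ^ (m k))]
  have hcf : ∀ m : Fin d →₀ ℕ, m.degree = ∑ i, m i := by
    intro m
    rw [Finsupp.degree_eq_sum]
  refine Finset.sum_subset_zero_on_sdiff ?_ ?_ ?_
  · intro m hm
    rw [MvPolynomial.mem_support_iff, MvPolynomial.coeff_homogeneousComponent] at hm
    simp only [ne_eq, ite_eq_right_iff, Classical.not_imp] at hm
    simp [Finset.mem_finsuppAntidiag, ← hcf, hm.1]
  · intro m hm
    rw [Finset.mem_sdiff] at hm
    obtain ⟨ha, hb⟩ := hm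
    have : m.degree = N := by
      rw [hcf]; exact (Finset.mem_finsuppAntidiag.1 ha).1
    rw [MvPolynomial.notMem_support_iff, MvPolynomial.coeff_homogeneousComponent, if_pos this] at hb
    simp [hb]
  · intro m hm
    rw [MvPolynomial.mem_support_iff, MvPolynomial.coeff_homogeneousComponent] at hm
    simp only [ne_eq, ite_eq_right_iff, Classical.not_imp] at hm
    rw [MvPolynomial.coeff_homogeneousComponent, if_pos hm.1, smul_eq_mul]

/-- the open cone -/
def coneS (n : ℕ) : Set (E n) := {Z | ‖initC Z‖ < lastC Z}

lemma inj_cone {n N : ℕ} (c : MonIx (n+1) N → ℝ)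
    (h : ∀ Z ∈ coneS n, ∑ i, c i • monF i Z = 0) : c = 0 := by
  let p : MvPolynomial (Fin (n+1)) ℝ := ∑ i, MvPolynomial.monomial i.1 (c i)
  have hp : p = 0 := by
    refine MvPolynomial.funext_set
      (fun i => Fin.lastCases (motive := fun _ => Set ℝ) (Set.Ioi (n:ℝ)) (fun _ => Set.Ioo (0:ℝ) 1) i)
      (fun i => ?_) ?_
    · induction i using Fin.lastCases with
      | last => simpa using Set.Ioi_infinite (n:ℝ)
      | cast i => simpa using Set.Ioo_infinite (zero_lt_one (α := ℝ))
    · intro z hz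
      have hZ : WithLp.toLp 2 z ∈ coneS n := by
        have hl := hz (Fin.last n) (Set.mem_univ _)
        simp only [Fin.lastCases_last, Set.mem_Ioi] at hl
        change ‖initC (WithLp.toLp 2 z)‖ < z (Fin.last n)
        refine lt_of_le_of_lt ?_ hl
        have hn0 : ‖initC (WithLp.toLp 2 z)‖ ^ 2 ≤ (n:ℝ) := by
          rw [EuclideanSpace.real_norm_sq_eq]
          calc _ ≤ ∑ i : Fin n, (1:ℝ) := by
                refine Finset.sum_le_sum fun i _ => ?_
                have hi := hz i.castSucc (Set.mem_univ _)
                simp only [Fin.lastCases_castSucc, Set.mem_Ioo] at hi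
                change (z i.castSucc)^2 ≤ 1
                nlinarith [hi.1, hi.2]
            _ = n := by simp
        rcases Nat.eq_zero_or_pos n with h0 | h0
        · subst h0
          simp at hn0
          simp [hn0]
        · have h1 : (1:ℝ) ≤ n := by exact_mod_cast h0
          nlinarith [norm_nonneg (initC (WithLp.toLp 2 z))]
      have := h _ hZ
      simp only [p, map_sum, map_zero]
      rw [← this]
      refine Finset.sum_congr rfl fun i _ => ?_
      rw [MvPolynomial.eval_monomial, Finsupp.prod_fintype _ _ (by simp)]
      rfl
  funext i
  have h2 := congrArg (MvPolynomial.coeff i.1) hp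
  simp only [p, MvPolynomial.coeff_sum, MvPolynomial.coeff_monomial, MvPolynomial.coeff_zero] at h2
  rw [Finset.sum_eq_single i] at h2
  · simpa using h2
  · intro b _ hb
    rw [if_neg]
    exact fun h => hb (Subtype.ext h)
  · simp

lemma coeffs_tendsto {n N : ℕ} (c : ℕ → MonIx (n+1) N → ℝ) (c₀ : MonIx (n+1) N → ℝ)
    (h : ∀ Z ∈ coneS n, Tendsto (fun j => ∑ i, c j i • monF i Z) atTop
      (nhds (∑ i, c₀ i • monF i Z))) : Tendsto c atTop (nhds c₀) := by
  let T : (MonIx (n+1) N → ℝ) →ₗ[ℝ] (coneS n → ℝ) :=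
    { toFun := fun c Z => ∑ i, c i • monF i Z.1
      map_add' := by
        intro a b; funext Z; simp [add_mul, Finset.sum_add_distrib]
      map_smul' := by
        intro a b; funext Z; simp [mul_assoc, Finset.mul_sum] }
  have hT : LinearMap.ker T = ⊥ := by
    rw [LinearMap.ker_eq_bot']
    intro c hc
    exact inj_cone c fun Z hZ => congrFun hc ⟨Z, hZ⟩
  have hemb := LinearMap.isClosedEmbedding_of_injective hT
  rw [hemb.isInducing.tendsto_nhds_iff, tendsto_pi_nhds]
  intro Z
  exact h Z.1 Z.2

lemma unif_of_coeffs {ι X G : Type*} [Fintype ι] [TopologicalSpace X] [NormedAddCommGroup G]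
    [NormedSpace ℝ G] (F : ι → X → G) (hF : ∀ i, Continuous (F i)) (c : ℕ → ι → ℝ) (c₀ : ι → ℝ)
    (hc : Tendsto c atTop (nhds c₀)) (K : Set X) (hK : IsCompact K) :
    TendstoUniformlyOn (fun j Y => ∑ i, c j i • F i Y) (fun Y => ∑ i, c₀ i • F i Y) atTop K := by
  have hb : ∀ i, ∃ M, ∀ Y ∈ K, ‖F i Y‖ ≤ M := fun i => hK.exists_bound_of_continuousOn (hF i).continuousOn
  choose M hM using hb
  rw [Metric.tendstoUniformlyOn_iff]
  intro η hη
  have hlim : Tendsto (fun j => ∑ i, |c₀ i - c j i| * M i) atTop (nhds 0) := by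
    have : (0:ℝ) = ∑ i, |c₀ i - c₀ i| * M i := by simp
    rw [this]
    refine tendsto_finsetSum _ fun i _ => ?_
    exact ((tendsto_const_nhds.sub ((tendsto_pi_nhds.1 hc) i)).abs).mul_const _
  filter_upwards [hlim.eventually (gt_mem_nhds hη)] with j hj Y hY
  refine lt_of_le_of_lt ?_ hj
  rw [dist_eq_norm, ← Finset.sum_sub_distrib]
  refine (norm_sum_le _ _).trans (Finset.sum_le_sum fun i _ => ?_)
  rw [← sub_smul, norm_smul, Real.norm_eq_abs]
  exact mul_le_mul_of_nonneg_left (hM i Y hY) (abs_nonneg _)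

lemma cone_mem_dom {n : ℕ} {φ : Eb n → ℝ} (hφ : ContDiff ℝ 1 φ)
    (hφbd : ∀ x : Eb n, ‖fderiv ℝ φ x‖ ≤ 1) (x : Eb n) {Z : E n} (hZ : Z ∈ coneS n)
    {r : ℝ} (hr : 0 < r) : graphPt x (φ x) + r • Z ∈ Dom φ := by
  have h1 : initC (graphPt x (φ x) + r • Z) = x + r • initC Z := by
    ext i
    simp [initC, graphPt]
  have h2 : lastC (graphPt x (φ x) + r • Z) = φ x + r * lastC Z := by
    simp [lastC, graphPt]
  change φ (initC (graphPt x (φ x) + r • Z)) < lastC (graphPt x (φ x) + r • Z)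
  rw [h1, h2]
  have h3 := Convex.norm_image_sub_le_of_norm_fderiv_le (𝕜 := ℝ) (f := φ) (C := 1) (s := Set.univ)
    (fun y _ => (hφ.differentiable one_ne_zero) y) (fun y _ => hφbd y) convex_univ
    (Set.mem_univ x) (Set.mem_univ (x + r • initC Z))
  rw [add_sub_cancel_left, norm_smul, Real.norm_eq_abs, Real.norm_eq_abs, abs_of_pos hr, one_mul] at h3
  have h4 : r * ‖initC Z‖ < r * lastC Z := mul_lt_mul_of_pos_left hZ hr
  have := le_abs_self (φ (x + r • initC Z) - φ x)
  linarith

/-- continuity of the leading polynomials in the expansion. If `u` admits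
expansions with homogeneous harmonic polynomials `P_j` of the same degree `N` at boundary
points `X_j → X₀`, with uniform constants and a common error modulus `ε(r) → 0`, then
`P_j → P₀` uniformly on the unit ball, and hence together with all derivatives uniformly
on every compact set (`C^k`-convergence for every `k`). -/
theorem leading_polynomials_converge
    {n : ℕ} (hn : 1 ≤ n)
    (θ : ℝ → ℝ) (hθmono : MonotoneOn θ (Set.Ici (0:ℝ)))
    (hθnn : ∀ r : ℝ, 0 ≤ r → 0 ≤ θ r)
    (hθ0 : Tendsto θ (nhdsWithin 0 (Set.Ioi 0)) (nhds 0))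
    (φ : Eb n → ℝ) (hφ : ContDiff ℝ 1 φ)
    (hφbd : ∀ x : Eb n, ‖fderiv ℝ φ x‖ ≤ 1)
    (hφmod : ∀ x y : Eb n, ‖fderiv ℝ φ x - fderiv ℝ φ y‖ ≤ θ ‖x - y‖)
    (u : E n → ℝ)
    (N : ℕ) (hN : 1 ≤ N)
    (ε : ℝ → ℝ) (hεnn : ∀ r : ℝ, 0 < r → 0 ≤ ε r)
    (hε0 : Tendsto ε (nhdsWithin 0 (Set.Ioi 0)) (nhds 0))
    (x : ℕ → Eb n) (x₀ : Eb n)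
    (hconv : Tendsto (fun j => graphPt (x j) (φ (x j))) atTop
      (nhds (graphPt x₀ (φ x₀))))
    (R C : ℝ) (hR : 0 < R) (hC : 0 < C)
    (P : ℕ → E n → ℝ) (P₀ : E n → ℝ)
    (hPj : ∀ j, IsHomHarmPoly N (P j))
    (hP₀ : IsHomHarmPoly N P₀)
    (hexpj : ∀ j, ∀ X ∈ ball (graphPt (x j) (φ (x j))) R ∩ Dom φ,
      |u X - P j (X - graphPt (x j) (φ (x j)))| ≤
        C * ‖X - graphPt (x j) (φ (x j))‖ ^ N * ε ‖X - graphPt (x j) (φ (x j))‖)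
    (hexp₀ : ∀ X ∈ ball (graphPt x₀ (φ x₀)) R ∩ Dom φ,
      |u X - P₀ (X - graphPt x₀ (φ x₀))| ≤
        C * ‖X - graphPt x₀ (φ x₀)‖ ^ N * ε ‖X - graphPt x₀ (φ x₀)‖) :
    TendstoUniformlyOn (fun j => P j) P₀ atTop (ball (0 : E n) 1) ∧
    ∀ (k : ℕ) (K : Set (E n)), IsCompact K →
      TendstoUniformlyOn (fun j Y => iteratedFDeriv ℝ k (P j) Y)
        (fun Y => iteratedFDeriv ℝ k P₀ Y) atTop K := by
  obtain ⟨c₀, hc₀⟩ := exists_coeffs hP₀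
  choose c hc using fun j => exists_coeffs (hPj j)
  have hP₀c : Continuous P₀ := by
    rw [show P₀ = fun x => ∑ i, c₀ i • monF i x from funext hc₀]
    exact continuous_finsetSum _ fun i _ => (continuous_const (y := c₀ i)).mul (monF_contDiff i 0).continuous
  have hpt : ∀ Z ∈ coneS n, Tendsto (fun j => P j Z) atTop (nhds (P₀ Z)) := by
    intro Z hZ
    have hZ0 : 0 < ‖Z‖ := by
      rw [norm_pos_iff]
      rintro rfl
      have : ‖initC (0 : E n)‖ < lastC (0 : E n) := hZ
      have h0 : lastC (0 : E n) = 0 := rfl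
      linarith [norm_nonneg (initC (0 : E n))]
    rw [Metric.tendsto_atTop']
    intro η hη
    set A : ℝ := C * (2 * ‖Z‖) ^ N with hA
    have hApos : 0 < A := by positivity
    set e : ℝ := η / (4 * A) with he
    have hepos : 0 < e := by positivity
    obtain ⟨δ, hδ, hδε⟩ : ∃ δ > 0, ∀ s, 0 < s → s < δ → ε s < e := by
      have := hε0.eventually (gt_mem_nhds hepos)
      rw [eventually_nhdsWithin_iff, Metric.eventually_nhds_iff] at this
      obtain ⟨δ, hδ, h⟩ := this
      refine ⟨δ, hδ, fun s hs hsd => h ?_ hs⟩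
      rwa [Real.dist_eq, sub_zero, abs_of_pos hs]
    obtain ⟨r, hr, hrm⟩ : ∃ r : ℝ, 0 < r ∧ 2 * (r * ‖Z‖) < min δ R := by
      have hm : 0 < min δ R := lt_min hδ hR
      refine ⟨min δ R / (4 * ‖Z‖), by positivity, ?_⟩
      have : 2 * (min δ R / (4 * ‖Z‖) * ‖Z‖) = min δ R / 2 := by field_simp; norm_num
      rw [this]; linarith
    have hrδ := hrm.trans_le (min_le_left _ _)
    have hrR := hrm.trans_le (min_le_right _ _)
    have hrZ : 0 < r * ‖Z‖ := by positivity
    set X₀ := graphPt x₀ (φ x₀) with hX₀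
    have hw : Tendsto (fun j => P₀ (Z + r⁻¹ • (graphPt (x j) (φ (x j)) - X₀))) atTop (nhds (P₀ Z)) := by
      refine (hP₀c.tendsto Z).comp ?_
      have : Tendsto (fun j => Z + r⁻¹ • (graphPt (x j) (φ (x j)) - X₀)) atTop
          (nhds (Z + r⁻¹ • (X₀ - X₀))) :=
        tendsto_const_nhds.add ((hconv.sub_const X₀).const_smul r⁻¹)
      simpa using this
    have e1 := (Metric.tendsto_nhds.1 hw) (η/2) (by positivity)
    have e2 := (Metric.tendsto_nhds.1 hconv) (r * ‖Z‖ / 2) (by positivity)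
    obtain ⟨J, hJ⟩ := eventually_atTop.1 (e1.and e2)
    refine ⟨J, fun j hj => ?_⟩
    obtain ⟨h1, h2⟩ := hJ j hj.le
    set Xj := graphPt (x j) (φ (x j)) with hXj
    have hD : Xj + r • Z ∈ Dom φ := cone_mem_dom hφ hφbd (x j) hZ hr
    have hnr : ‖r • Z‖ = r * ‖Z‖ := by rw [norm_smul, Real.norm_eq_abs, abs_of_pos hr]
    rw [dist_eq_norm] at h2
    set V := Xj + r • Z - X₀ with hV
    have hVeq : V = r • Z + (Xj - X₀) := by rw [hV]; abel
    have hVu : ‖V‖ ≤ 2 * (r * ‖Z‖) := by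
      rw [hVeq]
      refine (norm_add_le _ _).trans ?_
      rw [hnr]; linarith
    have hVl : 0 < ‖V‖ := by
      have : ‖r • Z‖ ≤ ‖V‖ + ‖Xj - X₀‖ := by
        have : r • Z = V - (Xj - X₀) := by rw [hVeq]; abel
        rw [this]; exact norm_sub_le _ _
      rw [hnr] at this
      linarith
    have b1 := hexpj j (Xj + r • Z) ⟨by
      rw [mem_ball, dist_eq_norm, add_sub_cancel_left, hnr]; linarith, hD⟩
    have b2 := hexp₀ (Xj + r • Z) ⟨by
      rw [mem_ball, dist_eq_norm]; exact hVu.trans_lt hrR, hD⟩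
    rw [add_sub_cancel_left, hnr] at b1
    rw [← hV] at b2
    have bd : ∀ s, 0 < s → s ≤ 2 * (r * ‖Z‖) → C * s ^ N * ε s ≤ r ^ N * (A * e) := by
      intro s hs hs2
      have : C * s ^ N ≤ r ^ N * A := by
        have : s ^ N ≤ (2 * (r * ‖Z‖)) ^ N := pow_le_pow_left₀ hs.le hs2 N
        calc C * s ^ N ≤ C * (2 * (r * ‖Z‖)) ^ N := mul_le_mul_of_nonneg_left this hC.le
          _ = r ^ N * A := by rw [hA, show 2 * (r * ‖Z‖) = r * (2 * ‖Z‖) by ring, mul_pow]; ring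
      calc C * s ^ N * ε s ≤ (r ^ N * A) * e :=
            mul_le_mul this (hδε s hs (hs2.trans_lt hrδ)).le (hεnn s hs) (by positivity)
        _ = _ := by ring
    have b1' := b1.trans (bd _ hrZ (by linarith))
    have b2' := b2.trans (bd _ hVl hVu)
    have hAe : A * e = η / 4 := by rw [he]; field_simp
    rw [hAe] at b1' b2'
    have q1 : P j (r • Z) = r ^ N * P j Z := (hPj j).2.1 r hr Z
    have q2 : P₀ V = r ^ N * P₀ (Z + r⁻¹ • (Xj - X₀)) := by
      rw [← hP₀.2.1 r hr, smul_add, smul_inv_smul₀ hr.ne', hVeq]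
    rw [q1] at b1'
    rw [q2] at b2'
    have hrN : 0 < r ^ N := by positivity
    have key : |P j Z - P₀ (Z + r⁻¹ • (Xj - X₀))| ≤ η / 2 := by
      have : r ^ N * |P j Z - P₀ (Z + r⁻¹ • (Xj - X₀))| ≤ r ^ N * (η / 2) := by
        rw [← abs_of_pos hrN, ← abs_mul, abs_of_pos hrN]
        rw [abs_le] at *
        constructor <;> nlinarith [b1'.1, b1'.2, b2'.1, b2'.2]
      exact le_of_mul_le_mul_left this hrN
    rw [Real.dist_eq] at h1 ⊢
    rw [abs_lt] at *
    rw [abs_le] at key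
    constructor <;> linarith [h1.1, h1.2, key.1, key.2]
  have hcc : Tendsto c atTop (nhds c₀) := by
    refine coeffs_tendsto c c₀ fun Z hZ => ?_
    have := hpt Z hZ
    rw [hc₀] at this
    exact this.congr fun j => hc j Z
  have hPj' : ∀ j, P j = fun x => ∑ i, c j i • monF i x := fun j => funext (hc j)
  have hP₀' : P₀ = fun x => ∑ i, c₀ i • monF i x := funext hc₀
  constructor
  · have := unif_of_coeffs (fun i : MonIx (n+1) N => monF i) (fun i => (monF_contDiff i 0).continuous)
      c c₀ hcc _ (isCompact_closedBall (0 : E n) 1)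
    rw [hP₀', show (fun j => P j) = fun j x => ∑ i, c j i • monF i x from funext hPj']
    exact this.mono ball_subset_closedBall
  · intro k K hK
    have hD : ∀ a : MonIx (n+1) N → ℝ, ∀ Y, iteratedFDeriv ℝ k (fun x => ∑ i, a i • monF i x) Y
        = ∑ i, a i • iteratedFDeriv ℝ k (monF i) Y := by
      intro a Y
      rw [iteratedFDeriv_fun_sum_apply]
      · refine Finset.sum_congr rfl fun i _ => ?_
        exact iteratedFDeriv_const_smul_apply' ((monF_contDiff i k).contDiffAt)
      · intro i _
        exact ((monF_contDiff i k).const_smul (a i)).contDiffAt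
    have := unif_of_coeffs (fun i : MonIx (n+1) N => iteratedFDeriv ℝ k (monF i))
      (fun i => (monF_contDiff i k).continuous_iteratedFDeriv le_rfl) c c₀ hcc K hK
    simp only [hP₀', hPj', hD]
    exact this
end
end

section
/- Let d ≥ 2, let φ : ℝ^{d−1} → ℝ be C¹, let Φ(y,s) := (y, s + φ(y)), let U ⊆ ℝ^d be open, and let u be harmonic on U (u is C² with Δu = 0). Set W := Φ^{−1}(U) = {(y,s) : (y, s+φ(y)) ∈ U} and v := u ∘ Φ on W. Then v is C¹ on W and v is a weak solution of −div(A(y)∇v) = 0 on W, i.e. for every smooth compactly supported ζ : W → ℝ one has ∫_W ⟨A(y) ∇v(y,s), ∇ζ(y,s)⟩ dy ds = 0, where A(y) := [[Id_{d−1}, −∇φ(y)], [−∇φ(y)ᵀ, 1 + |∇φ(y)|²]]. -/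
open Matrix Set MeasureTheory

noncomputable section

/-- The graph-flattening map `Φ(y,s) = (y, s + φ(y))`. -/
def flatMap {n : ℕ} (φ : Eb n → ℝ) (X : E n) : E n :=
  X + (φ (initC X)) • EuclideanSpace.single (Fin.last n) (1 : ℝ)

/-- the gradient of `φ : ℝ^n → ℝ` at `y`, as a vector of `ℝ^n` -/
def gradVec {n : ℕ} (φ : Eb n → ℝ) (y : Eb n) : Fin n → ℝ :=
  fun i => fderiv ℝ φ y (EuclideanSpace.single i 1)

/-- the gradient of a scalar function on `ℝ^{n+1}`, as a vector -/
def gradVec' {n : ℕ} (v : E n → ℝ) (X : E n) : Fin (n + 1) → ℝ :=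
  fun i => fderiv ℝ v X (EuclideanSpace.single i 1)

/-- The coefficient matrix `A(y) = [[Id_{n}, −∇φ(y)], [−∇φ(y)ᵀ, 1 + |∇φ(y)|²]]`. -/
def coefMat {n : ℕ} (g : Fin n → ℝ) : Matrix (Fin (n + 1)) (Fin (n + 1)) ℝ :=
  Matrix.of fun i j =>
    if hi : (i : ℕ) < n then
      if hj : (j : ℕ) < n then (if i = j then 1 else 0) else -(g ⟨i, hi⟩)
    else
      if hj : (j : ℕ) < n then -(g ⟨j, hj⟩) else 1 + ∑ k, (g k) ^ 2

/-- `initC` as a continuous linear map. -/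
def initL (n : ℕ) : E n →L[ℝ] Eb n :=
  ((EuclideanSpace.equiv (Fin n) ℝ).symm : (Fin n → ℝ) →L[ℝ] Eb n).comp
    (ContinuousLinearMap.pi fun i : Fin n => EuclideanSpace.proj (𝕜 := ℝ) (i.castSucc : Fin (n+1)))

theorem initL_apply {n : ℕ} (X : E n) : initL n X = initC X := rfl

theorem initC_last {n : ℕ} : initC (EuclideanSpace.single (Fin.last n) (1 : ℝ)) = (0 : Eb n) := by
  ext i
  simp [initC]

theorem initC_castSucc {n : ℕ} (j : Fin n) :
    initC (EuclideanSpace.single j.castSucc (1 : ℝ)) = (EuclideanSpace.single j 1 : Eb n) := by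
  ext i
  simp [initC, Pi.single_apply]

theorem initC_flatMap {n : ℕ} (φ : Eb n → ℝ) (X : E n) : initC (flatMap φ X) = initC X := by
  unfold flatMap
  rw [← initL_apply, map_add, map_smul, initL_apply, initL_apply, initC_last, smul_zero, add_zero]

theorem flatMap_neg_flatMap {n : ℕ} (φ : Eb n → ℝ) (X : E n) :
    flatMap (fun y => -φ y) (flatMap φ X) = X := by
  rw [flatMap, initC_flatMap, flatMap, neg_smul, add_neg_cancel_right]

theorem flatMap_flatMap_neg {n : ℕ} (φ : Eb n → ℝ) (X : E n) :
    flatMap φ (flatMap (fun y => -φ y) X) = X := by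
  have := flatMap_neg_flatMap (fun y => -φ y) X
  simpa using this

theorem flatMap_contDiff {n : ℕ} {φ : Eb n → ℝ} (hφ : ContDiff ℝ 1 φ) :
    ContDiff ℝ 1 (flatMap φ) := by
  have h : ContDiff ℝ 1 (fun X : E n => φ (initC X)) := hφ.comp (initL n).contDiff
  exact contDiff_id.add (h.smul contDiff_const)

/-- the derivative of the flattening map -/
def flatD {n : ℕ} (φ : Eb n → ℝ) (X : E n) : E n →L[ℝ] E n :=
  ContinuousLinearMap.id ℝ (E n) + ((fderiv ℝ φ (initC X)).comp (initL n)).smulRight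
    (EuclideanSpace.single (Fin.last n) (1 : ℝ))

theorem flatMap_hasFDerivAt {n : ℕ} {φ : Eb n → ℝ} (hφ : ContDiff ℝ 1 φ) (X : E n) :
    HasFDerivAt (flatMap φ) (flatD φ X) X := by
  have h1 : HasFDerivAt φ (fderiv ℝ φ (initC X)) (initL n X) :=
    (hφ.differentiable one_ne_zero _).hasFDerivAt
  have h : HasFDerivAt (fun X : E n => φ (initC X)) ((fderiv ℝ φ (initC X)).comp (initL n)) X :=
    h1.comp X (initL n).hasFDerivAt
  exact (hasFDerivAt_id X).add (h.smul_const _)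

theorem flatD_det {n : ℕ} (φ : Eb n → ℝ) (X : E n) : (flatD φ X).det = 1 := by
  have h : ((flatD φ X : E n →L[ℝ] E n) : E n →ₗ[ℝ] E n) = LinearMap.transvection
      (((fderiv ℝ φ (initC X)).comp (initL n) : E n →L[ℝ] ℝ) : E n →ₗ[ℝ] ℝ)
      (EuclideanSpace.single (Fin.last n) (1 : ℝ)) := by
    ext1 x
    rfl
  rw [ContinuousLinearMap.det, h, LinearMap.transvection.det]
  simp [initL_apply, initC_last]

theorem grad_comp_last {n : ℕ} {φ : Eb n → ℝ} (hφ : ContDiff ℝ 1 φ) (w : E n → ℝ) (X : E n)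
    (hw : DifferentiableAt ℝ w (flatMap φ X)) :
    gradVec' (w ∘ flatMap φ) X (Fin.last n) = gradVec' w (flatMap φ X) (Fin.last n) := by
  unfold gradVec'
  rw [(hw.hasFDerivAt.comp X (flatMap_hasFDerivAt hφ X)).fderiv]
  simp [flatD, initL_apply, initC_last]

theorem grad_comp_castSucc {n : ℕ} {φ : Eb n → ℝ} (hφ : ContDiff ℝ 1 φ) (w : E n → ℝ) (X : E n)
    (hw : DifferentiableAt ℝ w (flatMap φ X)) (i : Fin n) :
    gradVec' (w ∘ flatMap φ) X i.castSucc = gradVec' w (flatMap φ X) i.castSucc +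
      gradVec φ (initC X) i * gradVec' w (flatMap φ X) (Fin.last n) := by
  unfold gradVec' gradVec
  rw [(hw.hasFDerivAt.comp X (flatMap_hasFDerivAt hφ X)).fderiv]
  simp [flatD, initL_apply, initC_castSucc]

theorem coefMat_algebra {n : ℕ} (g : Fin n → ℝ) (a b p q : Fin (n + 1) → ℝ)
    (hp : ∀ i : Fin n, p i.castSucc = a i.castSucc + g i * a (Fin.last n))
    (hpl : p (Fin.last n) = a (Fin.last n))
    (hq : ∀ i : Fin n, q i.castSucc = b i.castSucc + g i * b (Fin.last n))
    (hql : q (Fin.last n) = b (Fin.last n)) :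
    ((coefMat g).mulVec p) ⬝ᵥ q = ∑ i, a i * b i := by
  have h1 : ∀ i : Fin n, (coefMat g).mulVec p i.castSucc = a i.castSucc := by
    intro i
    simp only [Matrix.mulVec, dotProduct, Fin.sum_univ_castSucc]
    simp [coefMat, hp, hpl]
  have h2 : (coefMat g).mulVec p (Fin.last n) =
      a (Fin.last n) - ∑ i : Fin n, g i * a i.castSucc := by
    simp only [Matrix.mulVec, dotProduct, Fin.sum_univ_castSucc]
    simp only [coefMat, hp, hpl, Matrix.of_apply, Fin.val_last, Fin.val_castSucc, lt_irrefl,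
      dite_false, Fin.is_lt, dite_true, Fin.eta]
    have : ∀ i : Fin n, -g i * (a i.castSucc + g i * a (Fin.last n)) =
      -(g i * a i.castSucc) - g i ^ 2 * a (Fin.last n) := fun i => by ring
    simp only [this, Finset.sum_sub_distrib, Finset.sum_neg_distrib, ← Finset.sum_mul]
    ring
  rw [dotProduct, Fin.sum_univ_castSucc, Fin.sum_univ_castSucc]
  simp only [h1, h2, hq, hql, mul_add, Finset.sum_add_distrib, sub_mul, Finset.sum_mul]
  have : ∀ i : Fin n, a i.castSucc * (g i * b (Fin.last n)) =
    g i * a i.castSucc * b (Fin.last n) := fun i => by ring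
  simp only [this]
  ring

theorem integrable_mul_of_tsupport {n : ℕ} {U : Set (E n)} (hU : IsOpen U) {f h : E n → ℝ}
    (hf : Continuous f) (hc : HasCompactSupport f) (hs : tsupport f ⊆ U)
    (hh : ContinuousOn h U) : Integrable (fun x => f x * h x) := by
  apply Continuous.integrable_of_hasCompactSupport
  · apply continuous_of_tsupport
    intro x hx
    have hx' : x ∈ U := hs (tsupport_mul_subset_left hx)
    exact hf.continuousAt.mul (hh.continuousAt (hU.mem_nhds hx'))
  · exact hc.mul_right

theorem integral_grad_eq_zero {n : ℕ} {U : Set (E n)} (hU : IsOpen U) {u : E n → ℝ}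
    (hu : IsHarmonicOn u U) {ψ : E n → ℝ} (hψ : ContDiff ℝ 1 ψ) (hc : HasCompactSupport ψ)
    (hs : tsupport ψ ⊆ U) :
    ∫ x in U, ∑ i, gradVec' u x i * gradVec' ψ x i = 0 := by
  have hd : ContDiffOn ℝ 1 (fderiv ℝ u) U := hu.1.fderiv_of_isOpen hU (by norm_num)
  have hdi : ∀ i : Fin (n + 1),
      ContDiffOn ℝ 1 (fun x => fderiv ℝ u x (EuclideanSpace.single i 1)) U :=
    fun i => hd.clm_apply contDiffOn_const
  have hdd : ∀ x ∈ U, DifferentiableAt ℝ (fderiv ℝ u) x := fun x hx =>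
    (hd.differentiableOn one_ne_zero).differentiableAt (hU.mem_nhds hx)
  have hdd2 : ∀ i : Fin (n + 1), ∀ x ∈ U, fderiv ℝ (fun x => fderiv ℝ u x
      (EuclideanSpace.single i 1)) x (EuclideanSpace.single i 1) =
      iteratedFDeriv ℝ 2 u x ![EuclideanSpace.single i 1, EuclideanSpace.single i 1] := by
    intro i x hx
    rw [iteratedFDeriv_two_apply, fderiv_clm_apply (hdd x hx) (differentiableAt_const _)]
    simp
  rw [setIntegral_eq_integral_of_forall_compl_eq_zero]
  swap
  · intro x hx
    have : fderiv ℝ ψ x = 0 := fderiv_of_notMem_tsupport ℝ (fun h => hx (hs h))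
    simp [gradVec', this]
  have hcψ := hψ.continuous
  have hI1 : ∀ i : Fin (n + 1), Integrable (fun x => fderiv ℝ ψ x (EuclideanSpace.single i 1) *
      fderiv ℝ u x (EuclideanSpace.single i 1)) := fun i =>
    integrable_mul_of_tsupport hU ((hψ.continuous_fderiv one_ne_zero).clm_apply continuous_const)
      (hc.fderiv_apply (𝕜 := ℝ) _) ((tsupport_fderiv_apply_subset ℝ _).trans hs)
      (hdi i).continuousOn
  have hI2 : ∀ i : Fin (n + 1), Integrable (fun x => ψ x * fderiv ℝ (fun x => fderiv ℝ u x
      (EuclideanSpace.single i 1)) x (EuclideanSpace.single i 1)) := fun i =>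
    integrable_mul_of_tsupport hU hcψ hc hs
      (((hdi i).continuousOn_fderiv_of_isOpen hU le_rfl).clm_apply continuousOn_const)
  have hI3 : ∀ i : Fin (n + 1), Integrable (fun x => ψ x * 
      fderiv ℝ u x (EuclideanSpace.single i 1)) := fun i =>
    integrable_mul_of_tsupport hU hcψ hc hs (hdi i).continuousOn
  have key : ∀ i : Fin (n + 1), ∫ x, gradVec' u x i * gradVec' ψ x i =
      - ∫ x, ψ x * fderiv ℝ (fun x => fderiv ℝ u x
      (EuclideanSpace.single i 1)) x (EuclideanSpace.single i 1) := by
    intro i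
    rw [integral_mul_fderiv_eq_neg_fderiv_mul_of_integrable (hI1 i) (hI2 i) (hI3 i)
      (fun x _ => hψ.differentiable one_ne_zero x)
      (fun x hx => ((hdi i).differentiableOn one_ne_zero).differentiableAt
        (hU.mem_nhds (hs hx))), neg_neg]
    simp only [gradVec', mul_comm]
  rw [integral_finsetSum]
  swap
  · intro i _
    simpa only [gradVec', mul_comm] using hI1 i
  simp only [key]
  rw [Finset.sum_neg_distrib, ← integral_finsetSum _ (fun i _ => hI2 i), neg_eq_zero]
  apply integral_eq_zero_of_ae
  refine Filter.Eventually.of_forall fun x => ?_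
  by_cases hx : x ∈ U
  · simp only [← Finset.mul_sum, hdd2 _ x hx, hu.2 x hx, mul_zero, Pi.zero_apply]
  · have : ψ x = 0 := image_eq_zero_of_notMem_tsupport (fun h => hx (hs h))
    simp [this]

/-- if `u` is harmonic on an open set `U ⊆ ℝ^{n+1}` and `Φ(y,s) = (y, s+φ(y))`
is the graph-flattening map of a `C¹` function `φ`, then `v = u ∘ Φ` is `C¹` on
`W = Φ⁻¹(U)` and is a weak solution of `−div(A(y)∇v) = 0` on `W`:
`∫_W ⟨A(y)∇v, ∇ζ⟩ = 0` for every smooth compactly supported test function `ζ` in `W`. -/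
theorem pullback_harmonic_is_weak_solution
    {n : ℕ} (hn : 1 ≤ n)
    (φ : Eb n → ℝ) (hφ : ContDiff ℝ 1 φ)
    (U : Set (E n)) (hU : IsOpen U)
    (u : E n → ℝ) (hu : IsHarmonicOn u U) :
    ContDiffOn ℝ 1 (u ∘ flatMap φ) (flatMap φ ⁻¹' U) ∧
    ∀ ζ : E n → ℝ, ContDiff ℝ (⊤ : ℕ∞) ζ → HasCompactSupport ζ →
      tsupport ζ ⊆ flatMap φ ⁻¹' U →
      ∫ X in flatMap φ ⁻¹' U,
        ((coefMat (gradVec φ (initC X))).mulVec (gradVec' (u ∘ flatMap φ) X)) ⬝ᵥ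
          (gradVec' ζ X) = 0 := by
  have hΦ := flatMap_contDiff hφ
  have hud : ∀ x ∈ U, DifferentiableAt ℝ u x := fun x hx =>
    (hu.1.differentiableOn two_ne_zero).differentiableAt (hU.mem_nhds hx)
  have hWo : IsOpen (flatMap φ ⁻¹' U) := hU.preimage hΦ.continuous
  refine ⟨(hu.1.of_le (by norm_num)).comp hΦ.contDiffOn (fun x hx => hx), ?_⟩
  intro ζ hζ hc hs
  have hΨ : ContDiff ℝ 1 (flatMap fun y => -φ y) := flatMap_contDiff hφ.neg
  let e : E n ≃ₜ E n :=
    { toFun := flatMap φ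
      invFun := flatMap fun y => -φ y
      left_inv := flatMap_neg_flatMap φ
      right_inv := flatMap_flatMap_neg φ
      continuous_toFun := hΦ.continuous
      continuous_invFun := hΨ.continuous }
  set ψ : E n → ℝ := ζ ∘ flatMap (fun y => -φ y) with hψdef
  have hζψ : ζ = ψ ∘ flatMap φ := by
    funext X
    simp [hψdef, flatMap_neg_flatMap]
  have hψ : ContDiff ℝ 1 ψ := (hζ.of_le (by exact_mod_cast le_top)).comp hΨ
  have hψc : HasCompactSupport ψ := hc.comp_homeomorph e.symm
  have hψs : tsupport ψ ⊆ U := by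
    have h1 : tsupport ψ ⊆ flatMap (fun y => -φ y) ⁻¹' tsupport ζ :=
      tsupport_comp_subset_preimage ζ hΨ.continuous
    intro x hx
    have := hs (h1 hx)
    rwa [mem_preimage, flatMap_flatMap_neg] at this
  have himg : Set.image (flatMap φ) (flatMap φ ⁻¹' U) = U :=
    image_preimage_eq U e.surjective
  have hcv := integral_image_eq_integral_abs_det_fderiv_smul (volume : Measure (E n))
    hWo.measurableSet (fun x _ => (flatMap_hasFDerivAt hφ x).hasFDerivWithinAt)
    (e.injective.injOn) (fun x => ∑ i, gradVec' u x i * gradVec' ψ x i)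
  rw [himg, integral_grad_eq_zero hU hu hψ hψc hψs] at hcv
  rw [hcv]
  apply setIntegral_congr_fun hWo.measurableSet
  intro X hX
  have hψd : DifferentiableAt ℝ ψ (flatMap φ X) := hψ.differentiable one_ne_zero _
  simp only [flatD_det, abs_one, one_smul]
  refine coefMat_algebra _ _ _ _ _ (grad_comp_castSucc hφ u X (hud _ hX))
    (grad_comp_last hφ u X (hud _ hX)) ?_ ?_
  · rw [hζψ]
    exact grad_comp_castSucc hφ ψ X hψd
  · rw [hζψ]
    exact grad_comp_last hφ ψ X hψd
end
end
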